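/- For a finite graph G with positive edge conductances c(e), the matrix-tree theorem: the number of spanning trees weighted by the product of their edge conductances equals any cofactor (principal minor obtained by deleting one row and the corresponding column) of the weighted Laplacian matrix Δ, where Δ_{u,v} = -c(uv) for u ≠ v adjacent, 0 for non-adjacent, and Δ_{v,v} = ∑_{u∼v} c(uv). -/

import Mathlib

open Finset
open scoped Classical

/-!
Choosing a term of the Laplacian row `∑ u, W i u • (e i - e u)` for every `i ≠ r` chooses a
parent for every non-root vertex, so multilinearity of the determinant expands the reduced minor
over parent maps. The matrix with rows `e i - e (f i)` is unitriangular when following parents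
always leads to `r`, and it kills the indicator of the vertices that never reach `r` otherwise;
hence precisely the rooted parent maps survive. For a symmetric weight they correspond to the
spanning trees, each of which is oriented towards `r` in exactly one way.
-/

lemma det_smul_eq_zero_of_mulVec_eq_zero {n R : Type*} [Fintype n] [DecidableEq n] [CommRing R]
    {M : Matrix n n R} {x : n → R} (h : M.mulVec x = 0) : M.det • x = 0 := by
  rw [← Matrix.one_mulVec x, ← Matrix.smul_mulVec, ← Matrix.adjugate_mul, ← Matrix.mulVec_mulVec, h,
    Matrix.mulVec_zero]

/-- A choice of a parent for every vertex other than the root `r`. -/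
abbrev ParentMap {V : Type*} (r : V) : Type _ := {v : V // v ≠ r} → V

namespace ParentMap

section Rooted

variable {V : Type*} {r : V} {f : ParentMap r}

/-- The parent relation: `f.Rel u v` means that `u` is the parent of `v`. -/
def Rel (f : ParentMap r) (u v : V) : Prop := ∃ h : v ≠ r, f ⟨v, h⟩ = u

lemma rel_apply (f : ParentMap r) (i : {v // v ≠ r}) : f.Rel (f i) i := ⟨i.2, rfl⟩

lemma acc_root (f : ParentMap r) : Acc f.Rel r := ⟨_, fun _ ⟨h, _⟩ => absurd rfl h⟩

lemma acc_apply_iff (f : ParentMap r) (i : {v // v ≠ r}) : Acc f.Rel (f i) ↔ Acc f.Rel i :=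
  ⟨fun h => ⟨_, fun _ ⟨_, hu⟩ => hu ▸ h⟩, fun h => h.inv (f.rel_apply i)⟩

/-- Parent maps that describe a tree rooted at `r`. On a finite vertex set, well-foundedness of the
parent relation says that following parents from any vertex ends, necessarily at `r`. -/
def IsRooted (f : ParentMap r) : Prop := WellFounded f.Rel

lemma IsRooted.apply_ne (hf : f.IsRooted) (i : {v // v ≠ r}) : f i ≠ i :=
  fun h => hf.irrefl.irrefl i ⟨i.2, h⟩

lemma IsRooted.no_two_cycle (hf : f.IsRooted) {i j : {v // v ≠ r}} (hi : f i = j) : f j ≠ i :=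
  fun hj => hf.asymmetric _ _ ⟨i.2, hi⟩ ⟨j.2, hj⟩

lemma IsRooted.injective_edge (hf : f.IsRooted) :
    Function.Injective fun i : {v // v ≠ r} => s((i : V), f i) := by
  intro i j hij
  rcases Sym2.eq_iff.1 hij with ⟨h, -⟩ | ⟨hi, hj⟩
  · exact Subtype.ext h
  · exact absurd hi.symm (hf.no_two_cycle hj)

lemma IsRooted.reachable_root (hf : f.IsRooted) {H : SimpleGraph V}
    (hH : ∀ i : {v // v ≠ r}, H.Adj i (f i)) (v : V) : H.Reachable v r := by
  induction v using hf.induction with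
  | _ v ih =>
    by_cases hv : v = r
    · rw [hv]
    · exact (hH ⟨v, hv⟩).reachable.trans (ih _ (f.rel_apply ⟨v, hv⟩))

lemma IsRooted.connected (hf : f.IsRooted) {H : SimpleGraph V}
    (hH : ∀ i : {v // v ≠ r}, H.Adj i (f i)) : H.Connected :=
  (SimpleGraph.connected_iff_exists_forall_reachable _).2
    ⟨r, fun v => (hf.reachable_root hH v).symm⟩

lemma exists_isRooted_of_connected {H : SimpleGraph V} (hH : H.Connected) (r : V) :
    ∃ f : ParentMap r, f.IsRooted ∧ ∀ i : {v // v ≠ r}, H.Adj i (f i) := by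
  have closer (i : {v // v ≠ r}) : ∃ w, H.Adj i w ∧ H.dist w r < H.dist i r := by
    obtain ⟨p, hp⟩ := hH.exists_walk_length_eq_dist i r
    obtain ⟨w, hw, q, rfl⟩ := SimpleGraph.Walk.exists_eq_cons_of_ne i.2 p
    refine ⟨w, hw, ?_⟩
    rw [← hp, SimpleGraph.Walk.length_cons]
    exact Nat.lt_succ_of_le (SimpleGraph.dist_le q)
  choose f hadj hdist using closer
  refine ⟨f, Subrelation.wf ?_ (measure fun v => H.dist v r).wf, hadj⟩
  rintro _ v ⟨hv, rfl⟩
  exact hdist ⟨v, hv⟩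

end Rooted

section Matrix

variable {V R : Type*} [DecidableEq V] {r : V} {f : ParentMap r}

/-- The matrix whose row `i` is `e i - e (f i)`, restricted to the vertices other than `r`. -/
def matrix (R : Type*) [Ring R] (f : ParentMap r) :
    Matrix {v // v ≠ r} {v // v ≠ r} R :=
  .of fun i j => (Pi.single (i : V) 1 - Pi.single (f i) 1 : V → R) j

variable [Fintype V]

lemma matrix_mulVec [Ring R] (f : ParentMap r) {x : V → R} (hx : x r = 0) (i : {v // v ≠ r}) :
    (f.matrix R).mulVec (fun j => x j) i = x i - x (f i) := by
  calc (f.matrix R).mulVec (fun j => x j) i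
      = ∑ v, (Pi.single (i : V) 1 - Pi.single (f i) 1 : V → R) v * x v := by
        rw [Fintype.sum_eq_add_sum_subtype_ne _ r, hx, mul_zero, zero_add]
        rfl
    _ = x i - x (f i) := by
        rw [← dotProduct, sub_dotProduct, single_one_dotProduct, single_one_dotProduct]

variable [CommRing R]

lemma det_matrix_of_isRooted (hf : f.IsRooted) : (f.matrix R).det = 1 := by
  obtain ⟨lt, hle, _⟩ : ∃ lt, f.Rel ≤ lt ∧ IsWellOrder V lt :=
    have : IsWellFounded V f.Rel := ⟨hf⟩
    IsWellFounded.exists_well_order_ge f.Rel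
  let _ : LinearOrder V := linearOrderOfSTO lt
  have parent_lt (i : {v // v ≠ r}) : f i < i := hle _ _ (f.rel_apply i)
  have hlower : (f.matrix R).IsLowerTriangular := by
    intro i j (hij : i < j)
    have hpj : f i < j := (parent_lt i).trans hij
    simp [matrix, Pi.single_apply, Subtype.coe_inj, hij.ne', hpj.ne']
  rw [Matrix.det_of_isLowerTriangular _ hlower]
  exact prod_eq_one fun i _ => by simp [matrix, (parent_lt i).ne']

lemma det_matrix_of_not_isRooted (hf : ¬ f.IsRooted) : (f.matrix R).det = 0 := by
  obtain ⟨v, hv⟩ : ∃ v, ¬ Acc f.Rel v := by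
    by_contra! h
    exact hf ⟨h⟩
  have hvr : v ≠ r := fun h => hv (h ▸ f.acc_root)
  let x : V → R := fun u => if Acc f.Rel u then 0 else 1
  have hker : (f.matrix R).mulVec (fun j => x j) = 0 := by
    ext i
    rw [f.matrix_mulVec (x := x) (if_pos f.acc_root)]
    simp only [x, f.acc_apply_iff, sub_self, Pi.zero_apply]
  simpa [x, hv] using congrFun (det_smul_eq_zero_of_mulVec_eq_zero hker) ⟨v, hvr⟩

lemma det_matrix (f : ParentMap r) : (f.matrix R).det = if f.IsRooted then 1 else 0 := by
  split_ifs with hf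
  exacts [det_matrix_of_isRooted hf, det_matrix_of_not_isRooted hf]

end Matrix

section Edges

variable {V : Type*} [Fintype V] [DecidableEq V] {r : V} {f g : ParentMap r}

/-- The undirected edges joining each non-root vertex to its parent. -/
def edges (f : ParentMap r) : Finset (Sym2 V) :=
  univ.image fun i : {v // v ≠ r} => s((i : V), f i)

lemma mem_edges {e : Sym2 V} : e ∈ f.edges ↔ ∃ i : {v // v ≠ r}, s((i : V), f i) = e := by
  simp [edges]

lemma IsRooted.card_edges (hf : f.IsRooted) : #f.edges = Fintype.card {v // v ≠ r} :=
  card_image_of_injective _ hf.injective_edge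

lemma IsRooted.prod_edges {M : Type*} [CommMonoid M] (hf : f.IsRooted) (c : Sym2 V → M) :
    ∏ e ∈ f.edges, c e = ∏ i : {v // v ≠ r}, c s((i : V), f i) :=
  prod_image hf.injective_edge.injOn

lemma IsRooted.eq_of_edges_eq (hf : f.IsRooted) (h : f.edges = g.edges) : f = g := by
  suffices ∀ (v : V) (hv : v ≠ r), f ⟨v, hv⟩ = g ⟨v, hv⟩ from funext fun i => this i i.2
  intro v
  induction v using hf.induction with
  | _ v ih =>
    intro hv
    obtain ⟨j, hj⟩ := mem_edges.1 (h ▸ mem_edges.2 ⟨⟨v, hv⟩, rfl⟩)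
    rcases Sym2.eq_iff.1 hj with ⟨rfl, hgj⟩ | ⟨hjf, hgj⟩
    · exact hgj.symm
    · have hfj : f j = v := (ih j ⟨hv, hjf.symm⟩ j.2).trans hgj
      exact absurd hfj (hf.no_two_cycle (i := ⟨v, hv⟩) hjf.symm)

lemma IsRooted.edgeSet_fromEdgeSet_edges (hf : f.IsRooted) :
    (SimpleGraph.fromEdgeSet (f.edges : Set (Sym2 V))).edgeSet = f.edges := by
  rw [SimpleGraph.edgeSet_fromEdgeSet, sdiff_eq_left, Set.disjoint_left]
  intro e he
  obtain ⟨i, rfl⟩ := mem_edges.1 he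
  exact (hf.apply_ne i).symm

lemma IsRooted.isTree_edges (hf : f.IsRooted) :
    (SimpleGraph.fromEdgeSet (f.edges : Set (Sym2 V))).IsTree := by
  refine SimpleGraph.isTree_iff_connected_and_card.2 ⟨hf.connected fun i => ?_, ?_⟩
  · exact (SimpleGraph.fromEdgeSet_adj _).2
      ⟨mem_edges.2 ⟨i, rfl⟩, (hf.apply_ne i).symm⟩
  · rw [hf.edgeSet_fromEdgeSet_edges, Nat.card_coe_set_eq, Set.ncard_coe_finset, hf.card_edges,
      Nat.card_eq_fintype_card, Fintype.card_eq_sum_ones, Fintype.card_eq_sum_ones,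
      Fintype.sum_eq_add_sum_subtype_ne _ r, add_comm]

lemma IsRooted.edges_eq_of_isTree (hf : f.IsRooted) {H : SimpleGraph V} (hH : H.IsTree)
    (hadj : ∀ i : {v // v ≠ r}, H.Adj i (f i)) : (f.edges : Set (Sym2 V)) = H.edgeSet := by
  have hle : SimpleGraph.fromEdgeSet (f.edges : Set (Sym2 V)) ≤ H := by
    rw [← SimpleGraph.edgeSet_subset_edgeSet, hf.edgeSet_fromEdgeSet_edges]
    intro e he
    obtain ⟨i, rfl⟩ := mem_edges.1 he
    exact hadj i
  have hmin := SimpleGraph.isTree_iff_minimal_connected.1 hH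
  rw [← hf.edgeSet_fromEdgeSet_edges, hmin.eq_of_le hf.isTree_edges.connected hle]

end Edges

end ParentMap

section DirectedMatrixTree

variable {V R : Type*} [Fintype V] [DecidableEq V]

/-- The Laplacian of the weighted digraph whose arc from `u` to `v` has weight `W u v`: out-degrees
on the diagonal, minus the weights. Loops cancel. -/
def digraphLaplacian [AddCommGroup R] (W : Matrix V V R) : Matrix V V R :=
  .diagonal (fun v => ∑ u, W v u) - W

lemma digraphLaplacian_row [Ring R] (W : Matrix V V R) (v : V) :
    digraphLaplacian W v = ∑ u, W v u • (Pi.single v 1 - Pi.single u 1 : V → R) := by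
  ext w
  simp [digraphLaplacian, Matrix.diagonal_apply, Pi.single_apply, mul_sub, sum_sub_distrib, eq_comm]

theorem det_submatrix_digraphLaplacian [CommRing R] (W : Matrix V V R) (r : V) :
    ((digraphLaplacian W).submatrix (Subtype.val : {v // v ≠ r} → V) Subtype.val).det =
      ∑ f : ParentMap r with f.IsRooted, ∏ i : {v // v ≠ r}, W i (f i) := by
  let row (i : {v // v ≠ r}) (u : V) : {v // v ≠ r} → R :=
    fun j => (Pi.single (i : V) 1 - Pi.single u 1 : V → R) j
  calc
    _ = Matrix.detRowAlternating (fun i : {v // v ≠ r} => ∑ u, W i u • row i u) := by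
      congr 1
      ext i j
      simp [digraphLaplacian_row, row]
    _ = ∑ f : ParentMap r, (∏ i : {v // v ≠ r}, W i (f i)) * (f.matrix R).det := by
      simp only [← AlternatingMap.coe_multilinearMap, MultilinearMap.map_sum,
        MultilinearMap.map_smul_univ, smul_eq_mul]
      rfl
    _ = _ := by
      simp only [ParentMap.det_matrix, mul_ite, mul_one, mul_zero, sum_filter]

end DirectedMatrixTree

section SpanningTrees

variable {V R : Type*} (G : SimpleGraph V) (c : Sym2 V → R)

/-- The weighted adjacency matrix of the network with graph `G` and edge conductances `c`. -/
noncomputable def conductanceMatrix [Zero R] : Matrix V V R :=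
  .of fun u v => if G.Adj u v then c s(u, v) else 0

variable [Fintype V]

/-- The spanning trees of `G`, encoded by their edge sets. -/
noncomputable def spanningTrees : Finset (Finset (Sym2 V)) :=
  G.edgeFinset.powerset.filter fun T : Finset (Sym2 V) =>
    (SimpleGraph.fromEdgeSet (T : Set (Sym2 V))).IsTree

lemma mem_spanningTrees {T : Finset (Sym2 V)} : T ∈ spanningTrees G ↔
    (T : Set (Sym2 V)) ⊆ G.edgeSet ∧ (SimpleGraph.fromEdgeSet (T : Set (Sym2 V))).IsTree := by
  rw [spanningTrees, mem_filter, mem_powerset, ← coe_subset, SimpleGraph.coe_edgeFinset]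

variable [DecidableEq V]

lemma eq_digraphLaplacian_conductanceMatrix [AddCommGroup R] {Δ : Matrix V V R}
    (hdiag : ∀ v, Δ v v = ∑ u ∈ G.neighborFinset v, c s(v, u))
    (hadj : ∀ u v, u ≠ v → G.Adj u v → Δ u v = -c s(u, v))
    (hoff : ∀ u v, u ≠ v → ¬ G.Adj u v → Δ u v = 0) :
    Δ = digraphLaplacian (conductanceMatrix G c) := by
  ext u v
  rcases eq_or_ne u v with rfl | huv
  · simp [digraphLaplacian, conductanceMatrix, hdiag, ← sum_filter,
      SimpleGraph.neighborFinset_eq_filter]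
  · by_cases h : G.Adj u v <;> simp [digraphLaplacian, conductanceMatrix, huv, h, hadj, hoff]

lemma sum_isRooted_conductanceMatrix [CommSemiring R] (r : V) :
    ∑ f : ParentMap r with f.IsRooted, ∏ i : {v // v ≠ r}, conductanceMatrix G c i (f i) =
      ∑ f : ParentMap r with f.IsRooted ∧ ∀ i : {v // v ≠ r}, G.Adj i (f i),
        ∏ i : {v // v ≠ r}, c s((i : V), f i) := by
  rw [← filter_filter, sum_filter (fun f : ParentMap r => ∀ i : {v // v ≠ r}, G.Adj i (f i))]
  refine sum_congr rfl fun f _ => ?_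
  simp only [conductanceMatrix, Matrix.of_apply, prod_ite_zero, mem_univ, forall_const]

lemma spanningTrees_eq_image_edges (r : V) :
    spanningTrees G =
      ({f : ParentMap r | f.IsRooted ∧ ∀ i : {v // v ≠ r}, G.Adj i (f i)} : Finset _).image
        ParentMap.edges := by
  ext T
  simp only [mem_spanningTrees, mem_image, mem_filter, mem_univ, true_and]
  constructor
  · rintro ⟨hTG, hT⟩
    obtain ⟨f, hf, hadj⟩ := ParentMap.exists_isRooted_of_connected hT.connected r
    have hmem (i : {v // v ≠ r}) : s((i : V), f i) ∈ T :=
      ((SimpleGraph.fromEdgeSet_adj _).1 (hadj i)).1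
    refine ⟨f, ⟨hf, fun i => hTG (hmem i)⟩, ?_⟩
    have hedges := hf.edges_eq_of_isTree hT hadj
    rwa [SimpleGraph.edgeSet_fromEdgeSet, sdiff_eq_left.2
      (Set.subset_compl_iff_disjoint_right.1 (hTG.trans G.edgeSet_subset_compl_diagSet)),
      SetLike.coe_set_eq] at hedges
  · rintro ⟨f, ⟨hf, hadj⟩, rfl⟩
    refine ⟨fun e he => ?_, hf.isTree_edges⟩
    obtain ⟨i, rfl⟩ := ParentMap.mem_edges.1 he
    exact hadj i

theorem weighted_matrix_tree_theorem_general [CommRing R] (r : V) :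
    ∑ T ∈ spanningTrees G, ∏ e ∈ T, c e =
      ((digraphLaplacian (conductanceMatrix G c)).submatrix
        (Subtype.val : {v // v ≠ r} → V) Subtype.val).det := by
  rw [det_submatrix_digraphLaplacian, sum_isRooted_conductanceMatrix,
    spanningTrees_eq_image_edges G r, sum_image]
  · refine sum_congr rfl fun f hf => ?_
    exact (mem_filter.1 hf).2.1.prod_edges c
  · exact fun f hf g _ h => (mem_filter.1 hf).2.1.eq_of_edges_eq h

end SpanningTrees

-- Filtering finsets by a predicate on sets makes Lean coerce the collection through the `Finset`
-- monad; the left-hand side is the resulting sum over sets.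
lemma sum_prod_filter_bind_pure_coe {α R : Type*} [Fintype α] [CommSemiring R]
    (s : Finset (Finset α)) (p : Set α → Prop) (c : α → R) :
    ∑ T ∈ (s >>= fun A => pure (A : Set α)).filter p, ∏ e ∈ T, c e =
      ∑ A ∈ s.filter fun A : Finset α => p A, ∏ e ∈ A, c e := by
  simp only [bind_pure_comp, fmap_def, filter_image]
  refine (sum_image Finset.coe_injective.injOn).trans ?_
  simp only [toFinset_coe]

/-- Weighted matrix-tree theorem: for a finite connected simple graph `G` with positive
conductances `c` on its edges, the sum over spanning trees of `G` of the product of the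
conductances of their edges equals any principal cofactor of the weighted Laplacian
(the determinant of the Laplacian with the row and column of an arbitrary vertex `v0`
deleted). -/
theorem weighted_matrix_tree_theorem {V : Type*} [Fintype V] [DecidableEq V]
    (G : SimpleGraph V) (hconn : G.Connected)
    (c : Sym2 V → ℝ) (hc : ∀ e ∈ G.edgeSet, 0 < c e)
    (Δ : Matrix V V ℝ)
    (hΔdiag : ∀ v : V, Δ v v = ∑ u ∈ G.neighborFinset v, c s(v, u))
    (hΔadj : ∀ u v : V, u ≠ v → G.Adj u v → Δ u v = -c s(u, v))
    (hΔoff : ∀ u v : V, u ≠ v → ¬G.Adj u v → Δ u v = 0)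
    (v0 : V) :
    ∑ T ∈ G.edgeFinset.powerset.filter
        (fun T => (SimpleGraph.fromEdgeSet (T : Set (Sym2 V))).IsTree),
      ∏ e ∈ T, c e =
    (Δ.submatrix (fun i : {u : V // u ≠ v0} => (i : V))
      (fun j : {u : V // u ≠ v0} => (j : V))).det := by
  rw [sum_prod_filter_bind_pure_coe, eq_digraphLaplacian_conductanceMatrix G c hΔdiag hΔadj hΔoff]
  exact weighted_matrix_tree_theorem_general G c v0
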